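/- (Correctness of loss-augmented (cost-augmented) scoring for arc-eager.) Fix n ≥ 1, an arc-eager parameterization (f_sh, f_ra, f_rl, f_re), and a gold head assignment h* : {1,…,n} → {0,…,n}. Define the augmented parameterization f' by f'_sh = f_sh, f'_re = f_re, f'_rl(i, j) = f_rl(i, j) + 1[h*(i) ≠ j], and f'_ra(k, i) = f_ra(k, i) + 1[h*(i) ≠ k], where 1[·] is the 0/1 indicator. Then for every complete arc-eager transition sequence t for a sentence of length n, F'(t) = F(t) + cost(t), where cost(t) = |{ m ∈ {1,…,n} : (h*(m), m) ∉ A(t) }| is the number of mis-attached nodes of t relative to h*. -/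

import Mathlib

/-- A parser configuration: a stack of indices (head of the list = top of stack),
a buffer of indices (head of the list = front of buffer), and a set of arcs
`(h, m)` meaning `h` is the head of modifier `m`. -/
structure Config where
  stack : List ℕ
  buffer : List ℕ
  arcs : Finset (ℕ × ℕ)

/-- Initial configuration for a sentence of length `n`:
empty stack, buffer `[0, 1, …, n]` (ROOT is index 0), empty arc set. -/
def initConfig (n : ℕ) : Config := ⟨[], List.range (n + 1), ∅⟩

/-- Stack-top feature of a configuration: `none` plays the role of the dummy index ⊥
used when the stack is empty. -/
def stackFeat (c : Config) : Option ℕ := c.stack.head?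

/-- Buffer-front feature of a configuration: the end-marker index `n + 1`
when the buffer is empty. -/
def bufFeat (n : ℕ) (c : Config) : ℕ := c.buffer.headD (n + 1)

/-- Arc-eager transition labels. -/
inductive ETrans
  | sh | rl | ra | re
deriving DecidableEq

/-- Single arc-eager transitions between configurations. -/
inductive EStep : Config → ETrans → Config → Prop
  | sh (σ b β A) : EStep ⟨σ, b :: β, A⟩ .sh ⟨b :: σ, β, A⟩
  | rl (s σ b β A) (h : ∀ x, (x, s) ∉ A) :
      EStep ⟨s :: σ, b :: β, A⟩ .rl ⟨σ, b :: β, insert (b, s) A⟩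
  | ra (s σ b β A) :
      EStep ⟨s :: σ, b :: β, A⟩ .ra ⟨b :: s :: σ, β, insert (s, b) A⟩
  | re (s σ β A) (h : ∃ x, (x, s) ∈ A) :
      EStep ⟨s :: σ, β, A⟩ .re ⟨σ, β, A⟩

/-- `ETrace c t c'` holds when `t` is a list of (configuration, transition) pairs,
each transition taken in the recorded configuration, leading from `c` to `c'`. -/
inductive ETrace : Config → List (Config × ETrans) → Config → Prop
  | nil (c) : ETrace c [] c
  | cons {c c' cf : Config} {τ : ETrans} {rest} :
      EStep c τ c' → ETrace c' rest cf → ETrace c ((c, τ) :: rest) cf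

/-- Score of an arc-eager transition sequence under parameterization
`(fsh, fra, frl, fre)`: the sum, over the transitions, of the corresponding
scoring function evaluated at the feature pair of the configuration in which
the transition is taken. -/
def escore (n : ℕ) (fsh fra frl fre : Option ℕ → ℕ → ℝ)
    (t : List (Config × ETrans)) : ℝ :=
  (t.map fun e =>
    (match e.2 with
      | ETrans.sh => fsh
      | ETrans.ra => fra
      | ETrans.rl => frl
      | ETrans.re => fre) (stackFeat e.1) (bufFeat n e.1)).sum

/-- Arc-hybrid transition labels. -/
inductive HTrans
  | sh | rr | rl
deriving DecidableEq

/-- Single arc-hybrid transitions between configurations. -/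
inductive HStep : Config → HTrans → Config → Prop
  | sh (σ b β A) : HStep ⟨σ, b :: β, A⟩ .sh ⟨b :: σ, β, A⟩
  | rr (s0 s1 σ β A) :
      HStep ⟨s0 :: s1 :: σ, β, A⟩ .rr ⟨s1 :: σ, β, insert (s1, s0) A⟩
  | rl (s σ b β A) :
      HStep ⟨s :: σ, b :: β, A⟩ .rl ⟨σ, b :: β, insert (b, s) A⟩

/-- `HTrace c t c'` holds when `t` is a list of (configuration, transition) pairs,
each transition taken in the recorded configuration, leading from `c` to `c'`. -/
inductive HTrace : Config → List (Config × HTrans) → Config → Prop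
  | nil (c) : HTrace c [] c
  | cons {c c' cf : Config} {τ : HTrans} {rest} :
      HStep c τ c' → HTrace c' rest cf → HTrace c ((c, τ) :: rest) cf

/-- Score of an arc-hybrid transition sequence under parameterization
`(gsh, grr, grl)`. -/
def hscore (n : ℕ) (gsh grr grl : Option ℕ → ℕ → ℝ)
    (t : List (Config × HTrans)) : ℝ :=
  (t.map fun e =>
    (match e.2 with
      | HTrans.sh => gsh
      | HTrans.rr => grr
      | HTrans.rl => grl) (stackFeat e.1) (bufFeat n e.1)).sum

structure AEInv (n : ℕ) (c : Config) : Prop where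
  bs : c.buffer.Pairwise (· < ·)
  ss : c.stack.Pairwise (· > ·)
  sb : ∀ s ∈ c.stack, ∀ b ∈ c.buffer, s < b
  sn : ∀ s ∈ c.stack, s ≤ n
  bn : ∀ b ∈ c.buffer, b ≤ n
  ba : ∀ b ∈ c.buffer, ∀ x, (x, b) ∉ c.arcs
  fn : ∀ m x y, (x, m) ∈ c.arcs → (y, m) ∈ c.arcs → x = y
  cov : ∀ m, m ≤ n → m ∈ c.stack ∨ m ∈ c.buffer ∨ ∃ x, (x, m) ∈ c.arcs
  an : ∀ m x, (x, m) ∈ c.arcs → m ≤ n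
  zz : ∀ x, (x, 0) ∈ c.arcs → 0 ∉ c.stack

theorem AEInv.init (n : ℕ) : AEInv n (initConfig n) := by
  constructor <;> simp [initConfig, List.pairwise_lt_range]

theorem AEInv.step {n : ℕ} {c c' : Config} {τ : ETrans} (hc : AEInv n c) (h : EStep c τ c') :
    AEInv n c' := by
  obtain ⟨h1, h2, h3, h4, h5, h6, h7, h8, h9, h10⟩ := hc
  cases h <;> simp only [List.pairwise_cons] at h1 h2 <;> constructor <;>
    simp only [List.pairwise_cons] <;> grind

def aeW (hstar : ℕ → ℕ) (A : Finset (ℕ × ℕ)) : ℝ :=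
  ((A.filter (fun p => hstar p.2 ≠ p.1)).card : ℝ)

theorem aeW_insert (hstar : ℕ → ℕ) (A : Finset (ℕ × ℕ)) (h m : ℕ) (hA : (h, m) ∉ A) :
    aeW hstar (insert (h, m) A) = aeW hstar A + if hstar m ≠ h then (1 : ℝ) else 0 := by
  unfold aeW
  rw [Finset.filter_insert]
  by_cases hh : hstar m = h
  · simp [hh]
  · simp [hh, hA]

theorem escore_cons' (n : ℕ) (fsh fra frl fre : Option ℕ → ℕ → ℝ) (c : Config) (τ : ETrans)
    (t : List (Config × ETrans)) :
    escore n fsh fra frl fre ((c, τ) :: t) =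
      (match τ with
      | ETrans.sh => fsh (stackFeat c) (bufFeat n c)
      | ETrans.ra => fra (stackFeat c) (bufFeat n c)
      | ETrans.rl => frl (stackFeat c) (bufFeat n c)
      | ETrans.re => fre (stackFeat c) (bufFeat n c)) + escore n fsh fra frl fre t := by
  cases τ <;> simp [escore]

theorem ae_trace (n : ℕ) (fsh fra frl fre : Option ℕ → ℕ → ℝ) (hstar : ℕ → ℕ)
    {c cf : Config} {t : List (Config × ETrans)} (ht : ETrace c t cf) (hc : AEInv n c) :
    AEInv n cf ∧ escore n fsh
        (fun kk i => fra kk i + kk.elim 0 (fun kv => if hstar i ≠ kv then (1 : ℝ) else 0))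
        (fun s j => frl s j + s.elim 0 (fun i => if hstar i ≠ j then (1 : ℝ) else 0))
        fre t + aeW hstar c.arcs
      = escore n fsh fra frl fre t + aeW hstar cf.arcs := by
  induction ht with
  | nil c => exact ⟨hc, by simp [escore]⟩
  | cons hs _ ih =>
    obtain ⟨i1, i2⟩ := ih (hc.step hs)
    refine ⟨i1, ?_⟩
    rw [escore_cons', escore_cons']
    cases hs with
    | sh σ b β A => simp only at i2 ⊢; linarith
    | rl s σ b β A h =>
      simp only [aeW_insert _ _ _ _ (h b)] at i2
      change (frl (some s) b + if hstar s ≠ b then (1 : ℝ) else 0) + _ + aeW hstar A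
        = frl (some s) b + _ + _
      linarith
    | ra s σ b β A =>
      have h := hc.ba b (by simp) s
      simp only [aeW_insert _ _ _ _ h] at i2
      change (fra (some s) b + if hstar b ≠ s then (1 : ℝ) else 0) + _ + aeW hstar A
        = fra (some s) b + _ + _
      linarith
    | re s σ β A h => simp only at i2 ⊢; linarith

theorem aeW_final (n : ℕ) (hstar : ℕ → ℕ) (A : Finset (ℕ × ℕ)) (h : AEInv n ⟨[0], [], A⟩) :
    aeW hstar A = (((Finset.Icc 1 n).filter (fun m => (hstar m, m) ∉ A)).card : ℝ) := by
  obtain ⟨-, -, -, -, -, -, h7, h8, h9, h10⟩ := h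
  simp only at h7 h8 h9 h10
  unfold aeW
  congr 1
  refine Finset.card_bij (fun p _ => p.2) ?_ ?_ ?_
  · rintro ⟨x, m⟩ hp
    simp only [Finset.mem_filter, Finset.mem_Icc] at hp ⊢
    refine ⟨⟨?_, h9 m x hp.1⟩, fun hq => hp.2 (h7 m _ _ hq hp.1)⟩
    rcases Nat.eq_zero_or_pos m with rfl | hm
    · exact absurd (by simp) (h10 x hp.1)
    · exact hm
  · rintro ⟨x, m⟩ hp ⟨y, m'⟩ hq hmm
    simp only [Finset.mem_filter] at hp hq hmm
    subst hmm
    rw [h7 m x y hp.1 hq.1]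
  · intro m hm
    simp only [Finset.mem_filter, Finset.mem_Icc] at hm
    rcases h8 m hm.1.2 with h | h | ⟨x, hx⟩
    · simp at h; omega
    · simp at h
    · refine ⟨(x, m), ?_, rfl⟩
      simp only [Finset.mem_filter]
      exact ⟨hx, fun he => hm.2 (he ▸ hx)⟩

/-- **Correctness of loss-augmented (cost-augmented) scoring for arc-eager.**
With gold head assignment `hstar : {1,…,n} → {0,…,n}`, augmenting
`frl(i, j)` by `1[hstar i ≠ j]` and `fra(k, i)` by `1[hstar i ≠ k]`
adds to the score of every complete transition sequence exactly its cost,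
the number of mis-attached nodes. -/
theorem arc_eager_loss_augmented
    (n : ℕ) (hn : 1 ≤ n)
    (fsh fra frl fre : Option ℕ → ℕ → ℝ)
    (hstar : ℕ → ℕ)
    (hdom : ∀ m, 1 ≤ m → m ≤ n → hstar m ≤ n)
    (t : List (Config × ETrans)) (A : Finset (ℕ × ℕ))
    (ht : ETrace (initConfig n) t ⟨[0], [], A⟩) :
    escore n fsh
        (fun kk i => fra kk i + kk.elim 0 (fun kv => if hstar i ≠ kv then (1 : ℝ) else 0))
        (fun s j => frl s j + s.elim 0 (fun i => if hstar i ≠ j then (1 : ℝ) else 0))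
        fre t
      = escore n fsh fra frl fre t
        + (((Finset.Icc 1 n).filter (fun m => (hstar m, m) ∉ A)).card : ℝ) := by
  obtain ⟨h1, h2⟩ := ae_trace n fsh fra frl fre hstar ht (AEInv.init n)
  rw [← aeW_final n hstar A h1]
  have h0 : aeW hstar (initConfig n).arcs = 0 := by simp [aeW, initConfig]
  rw [h0, add_zero] at h2
  exact h2
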